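/- Let K = F_2(x)(y) where y satisfies y^2 + (x^3 + x^2 + 1)·y + (x^3 + x^2 + 1)(x^4 + x^3 + 1) = 0 (this quadratic polynomial in y is irreducible over F_2(x)). Then the ideal class group Cl(O_K), where O_K is the integral closure of F_2[x] in K, is cyclic of order 2. -/

import Mathlib

/-!
Write `A = x³ + x² + 1` and `B = x⁴ + x³ + 1`, coprime polynomials over `𝔽₂` with `A` irreducible,
so that `y² + A y + A B = 0`. The polynomial is Eisenstein at `A`, the only finite ramified prime,
whence `O_K = 𝔽₂[x] ⊕ 𝔽₂[x] y` (`polynomial_of_integral`, `exists_rep_of_isIntegral`); everything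
else is deduced from this description, packaged as `IsModel`.

The element `a + b y` has norm `a² + A a b + A B b²`, of degree at least `7` as soon as `b ≠ 0`.

* The ideal `P = (A, y)` satisfies `P² = (A)` (`IsModel.ramified_sq`). A generator of `P` would have
  norm dividing `A`, so it would be a polynomial `a` with `a² ∣ A`, hence a unit, which is absurd
  (`IsModel.ramified_not_principal`). The class of `P` therefore has order exactly `2`.
* A prime over an irreducible polynomial `p` is either `(p)`, or `(p, y + v)` with `deg v < deg p`
  and `p ∣ N(y + v)`. If `deg p ≤ 3`, the second case only happens for `p = A`, the other
  irreducible polynomials of degree at most `3` being inert (`eq_A_of_small`). If `deg p ≥ 4`, write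
  `N(y + v) = p w`; then `deg w < deg p` and `(p, y + v) (w, y + v) = (y + v)`, so the class of the
  prime is inverse to the class of an ideal containing a polynomial of smaller degree
  (`IsModel.good_of_prime`). This is the reduction of binary quadratic forms, and by induction on
  the degree every ideal class is a power of the class of `P` (`IsModel.good`).
-/

open Polynomial

namespace ClassGroupSeven

/-! ### Polynomials over the field with two elements -/

theorem two_eq_zero_poly : (2 : (ZMod 2)[X]) = 0 := by
  have : (2 : ZMod 2) = 0 := by decide
  rw [← C_ofNat, this, C_0]

/-- The polynomial `x³ + x + 1` is inert: with `t` a root of it, `N(y + e + f t + g t²) ≠ 0` for all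
bits `e`, `f`, `g`. -/
theorem inertThree {S : Type*} [CommRing S] [Nontrivial S] (t e f g : S) (h2 : (2:S) = 0)
  (he : e^2 = e) (hf : f^2=f) (hg : g^2=g) (ht : t^3 + t + 1 = 0)
  (hN : (e + f*t+g*t^2)^2 + (t^3+t^2+1)*(e + f*t+g*t^2) + (t^3+t^2+1)*(t^4+t^3+1) = 0) : False := by
  have := one_ne_zero (α := S)
  grind
/-- The polynomial `x² + x + 1` is inert. -/
theorem inertTwo {S : Type*} [CommRing S] [Nontrivial S] (t e f : S) (h2 : (2:S) = 0)
  (he : e^2 = e) (hf : f^2=f) (ht : t^2 + t + 1 = 0)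
  (hN : (e + f*t)^2 + (t^3+t^2+1)*(e + f*t) + (t^3+t^2+1)*(t^4+t^3+1) = 0) : False := by
  have := one_ne_zero (α := S)
  grind
/-- The polynomials `x` and `x + 1` are inert. -/
theorem inertOne {S : Type*} [CommRing S] [Nontrivial S] (t e : S) (h2 : (2:S) = 0)
  (he : e^2 = e) (ht : t = 0 ∨ t = 1)
  (hN : e^2 + (t^3+t^2+1)*e + (t^3+t^2+1)*(t^4+t^3+1) = 0) : False := by
  have := one_ne_zero (α := S)
  grind

/-- The ramified polynomial, which is the linear coefficient in the equation of `y`. -/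
noncomputable def A : (ZMod 2)[X] := X ^ 3 + X ^ 2 + 1
/-- The constant coefficient in the equation of `y` is `A * B`. -/
noncomputable def B : (ZMod 2)[X] := X ^ 4 + X ^ 3 + 1

theorem natDegree_A : A.natDegree = 3 := by unfold A; compute_degree!
theorem natDegree_B : B.natDegree = 4 := by unfold B; compute_degree!

theorem irreducible_A : Irreducible A := by
  apply irreducible_of_degree_le_three_of_not_isRoot
  · rw [natDegree_A]; decide
  · simp only [IsRoot, A, eval_add, eval_pow, eval_X, eval_one]
    decide

theorem coprime_A_B : IsCoprime A B := by
  refine (irreducible_A.coprime_iff_not_dvd).2 fun h => ?_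
  have h1 : A ∣ X + 1 := by
    have : (X + 1 : (ZMod 2)[X]) = B - A * X + 2 * X := by unfold A B; ring
    rw [this, two_eq_zero_poly, zero_mul, add_zero]
    exact dvd_sub h (dvd_mul_right _ _)
  have h2 : (X + 1 : (ZMod 2)[X]).natDegree = 1 := by compute_degree!
  have h3 := natDegree_le_of_dvd h1 (fun h => by rw [h] at h2; simp at h2)
  rw [natDegree_A, h2] at h3
  omega

/-- The norm form: `nrm a b` is the norm of `a + b y`. -/
noncomputable abbrev nrm (a b : (ZMod 2)[X]) : (ZMod 2)[X] := a ^ 2 + A * a * b + A * B * b ^ 2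

/-- The degrees of `a²` and `A B b²` have different parity, and the middle term of the norm form never
reaches the larger of the two. -/
theorem seven_le_natDegree_nrm (a b : (ZMod 2)[X]) (hb : b ≠ 0) : 7 ≤ (nrm a b).natDegree := by
  have hA0 : A ≠ 0 := irreducible_A.ne_zero
  have hB0 : B ≠ 0 := fun h => by have := natDegree_B; rw [h] at this; simp at this
  have h1 : (A * B * b ^ 2).natDegree = 7 + 2 * b.natDegree := by
    rw [natDegree_mul (mul_ne_zero hA0 hB0) (pow_ne_zero _ hb), natDegree_mul hA0 hB0,
      natDegree_A, natDegree_B, natDegree_pow]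
  have h2 : (A * a * b).natDegree ≤ 3 + a.natDegree + b.natDegree := by
    refine natDegree_mul_le.trans ?_
    have := natDegree_mul_le (p := A) (q := a)
    rw [natDegree_A] at this
    omega
  have h3 : (a ^ 2).natDegree = 2 * a.natDegree := natDegree_pow _ _
  rcases le_or_gt a.natDegree (b.natDegree + 3) with h | h
  · unfold nrm
    rw [natDegree_add_eq_right_of_natDegree_lt, h1]
    · omega
    · have := natDegree_add_le (a ^ 2) (A * a * b)
      omega
  · unfold nrm
    rw [add_assoc, natDegree_add_eq_left_of_natDegree_lt, h3]
    · omega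
    · have := natDegree_add_le (A * a * b) (A * B * b ^ 2)
      omega

/-- Among the irreducible polynomials of degree at most `3`, only `A` has a degree one prime above
it. -/
theorem eq_A_of_small (p v : (ZMod 2)[X]) (hp : Irreducible p) (hd : p.natDegree ≤ 3)
    (hv : v.natDegree < p.natDegree) (hdvd : p ∣ nrm v 1) : p = A ∧ v = 0 := by
  -- the ramified case: `p = A` divides `v²`
  have key : p = A → p = A ∧ v = 0 := by
    rintro rfl
    refine ⟨rfl, ?_⟩
    have h1 : A ∣ v ^ 2 := by
      have : v ^ 2 = nrm v 1 - A * (v + B) := by unfold nrm; ring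
      rw [this]
      exact dvd_sub hdvd (dvd_mul_right _ _)
    exact eq_zero_of_dvd_of_natDegree_lt (irreducible_A.prime.dvd_of_dvd_pow h1) hv
  have hnt : Nontrivial (AdjoinRoot p) := AdjoinRoot.nontrivial p hp.degree_pos.ne'
  have hN : AdjoinRoot.mk p (nrm v 1) = 0 := AdjoinRoot.mk_eq_zero.2 hdvd
  have hP : ∀ q, q = p → AdjoinRoot.mk p q = 0 := fun q hq => hq ▸ AdjoinRoot.mk_self
  have h2 : (2 : AdjoinRoot p) = 0 := by
    rw [← map_ofNat (AdjoinRoot.mk p) 2, two_eq_zero_poly, map_zero]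
  have hC : ∀ e : ZMod 2, (AdjoinRoot.of p e) ^ 2 = AdjoinRoot.of p e := by
    intro e
    rw [← map_pow]
    congr 1
    revert e
    decide
  have bit : ∀ e : ZMod 2, e = 0 ∨ e = 1 := by decide
  have hlead : p.coeff p.natDegree = 1 :=
    (bit _).resolve_left (leadingCoeff_ne_zero.2 hp.ne_zero)
  have noroot : p.natDegree ≠ 1 → ∀ t : ZMod 2, p.eval t ≠ 0 := by
    intro h1 t ht
    exact h1 (natDegree_eq_of_degree_eq_some (degree_eq_one_of_irreducible_of_root hp ht))
  have hpos := hp.natDegree_pos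
  obtain h | h | h : p.natDegree = 1 ∨ p.natDegree = 2 ∨ p.natDegree = 3 := by omega
  · exfalso
    rw [h] at hlead hv
    have e1 : p = C (p.coeff 0) + X := by
      conv_lhs => rw [p.as_sum_range' 2 (by omega)]
      simp [Finset.sum_range_succ, ← C_mul_X_pow_eq_monomial, hlead]
    have e2 : v = C (v.coeff 0) := by
      conv_lhs => rw [v.as_sum_range' 1 (by omega)]
      simp
    rw [e2] at hN
    replace hP := hP _ e1.symm
    simp only [nrm, A, B, map_add, map_mul, map_pow, map_one, AdjoinRoot.mk_C, AdjoinRoot.mk_X]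
      at hN hP
    refine inertOne (AdjoinRoot.root p) _ h2 (hC (v.coeff 0)) ?_ (by linear_combination hN)
    rcases bit (p.coeff 0) with h0 | h0 <;> rw [h0] at hP
    · left
      simpa using hP
    · right
      rw [map_one] at hP
      linear_combination hP - h2
  · exfalso
    rw [h] at hlead hv
    have e1 : p = C (p.coeff 0) + C (p.coeff 1) * X + X ^ 2 := by
      conv_lhs => rw [p.as_sum_range' 3 (by omega)]
      simp [Finset.sum_range_succ, ← C_mul_X_pow_eq_monomial, hlead]
    have e2 : v = C (v.coeff 0) + C (v.coeff 1) * X := by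
      conv_lhs => rw [v.as_sum_range' 2 (by omega)]
      simp [Finset.sum_range_succ, ← C_mul_X_pow_eq_monomial]
    have n0 := noroot (by omega) 0
    have n1 := noroot (by omega) 1
    rw [e1] at n0 n1
    simp only [eval_add, eval_mul, eval_pow, eval_C, eval_X] at n0 n1
    have hc : p.coeff 0 = 1 ∧ p.coeff 1 = 1 := by
      generalize p.coeff 0 = a at *
      generalize p.coeff 1 = b at *
      clear * - n0 n1
      revert a b
      decide
    rw [e2] at hN
    replace hP := hP _ e1.symm
    rw [hc.1, hc.2] at hP
    simp only [nrm, A, B, map_add, map_mul, map_pow, map_one, AdjoinRoot.mk_C, AdjoinRoot.mk_X]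
      at hN hP
    exact inertTwo (AdjoinRoot.root p) _ _ h2 (hC (v.coeff 0)) (hC (v.coeff 1))
      (by linear_combination hP) (by linear_combination hN)
  · apply key
    by_contra hne
    rw [h] at hlead hv
    have e1 : p = C (p.coeff 0) + C (p.coeff 1) * X + C (p.coeff 2) * X ^ 2 + X ^ 3 := by
      conv_lhs => rw [p.as_sum_range' 4 (by omega)]
      simp [Finset.sum_range_succ, ← C_mul_X_pow_eq_monomial, hlead]
    have e2 : v = C (v.coeff 0) + C (v.coeff 1) * X + C (v.coeff 2) * X ^ 2 := by
      conv_lhs => rw [v.as_sum_range' 3 (by omega)]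
      simp [Finset.sum_range_succ, ← C_mul_X_pow_eq_monomial]
    have n0 := noroot (by omega) 0
    have n1 := noroot (by omega) 1
    rw [e1] at n0 n1
    simp only [eval_add, eval_mul, eval_pow, eval_C, eval_X] at n0 n1
    have hc : p.coeff 0 = 1 ∧ (p.coeff 1 = 1 ∧ p.coeff 2 = 0 ∨ p.coeff 1 = 0 ∧ p.coeff 2 = 1) := by
      generalize p.coeff 0 = a at *
      generalize p.coeff 1 = b at *
      generalize p.coeff 2 = c at *
      clear * - n0 n1
      revert a b c
      decide
    obtain ⟨h0, ⟨h1, h2'⟩ | ⟨h1, h2'⟩⟩ := hc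
    · rw [e2] at hN
      replace hP := hP _ e1.symm
      rw [h0, h1, h2'] at hP
      simp only [nrm, A, B, map_add, map_mul, map_pow, map_one, map_zero, AdjoinRoot.mk_C,
        AdjoinRoot.mk_X] at hN hP
      exact inertThree (AdjoinRoot.root p) _ _ _ h2 (hC (v.coeff 0)) (hC (v.coeff 1))
        (hC (v.coeff 2)) (by linear_combination hP) (by linear_combination hN)
    · apply hne
      rw [e1, h0, h1, h2']
      simp only [A, map_one, map_zero]
      ring

/-! ### Ideals and classes -/

section Ideals

open scoped nonZeroDivisors

/-- `IsModel y` says that `R` is the free `𝔽₂[x]`-algebra with basis `1, y` and `y² + A y + A B = 0`. -/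
structure IsModel {R : Type*} [CommRing R] [Algebra (ZMod 2)[X] R] (y : R) : Prop where
  root : y ^ 2 + algebraMap _ R A * y + algebraMap _ R (A * B) = 0
  exists_rep : ∀ z : R, ∃ a b : (ZMod 2)[X], z = algebraMap _ R a + algebraMap _ R b * y
  indep : ∀ a b : (ZMod 2)[X], algebraMap _ R a + algebraMap _ R b * y = 0 → a = 0 ∧ b = 0

variable {R : Type*} [CommRing R] [Algebra (ZMod 2)[X] R] {y : R}

local notation "φ" => algebraMap (ZMod 2)[X] R

theorem two_eq_zero : (2 : R) = 0 := by
  rw [← map_ofNat φ 2, two_eq_zero_poly, map_zero]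

theorem IsModel.injective (h : IsModel y) : Function.Injective φ := by
  rw [injective_iff_map_eq_zero]
  intro a ha
  exact (h.indep a 0 (by simp [ha])).1

theorem IsModel.ext (h : IsModel y) {a b c d : (ZMod 2)[X]}
    (e : φ a + φ b * y = φ c + φ d * y) : a = c ∧ b = d := by
  have := h.indep (a - c) (b - d) (by simp only [map_sub]; linear_combination e)
  exact ⟨sub_eq_zero.1 this.1, sub_eq_zero.1 this.2⟩

theorem IsModel.mul_rep (h : IsModel y) (a b c d : (ZMod 2)[X]) :
    (φ a + φ b * y) * (φ c + φ d * y) =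
      φ (a * c + A * B * b * d) + φ (a * d + b * c + A * b * d) * y := by
  have h1 := h.root
  have h2 := two_eq_zero (R := R)
  simp only [map_add, map_mul] at h1 ⊢
  linear_combination φ b * φ d * h1 - (φ b * φ d * (φ A * y + φ A * φ B)) * h2

/-- The conjugate of `y + v` is `y + v + A`. -/
theorem IsModel.mul_conj (h : IsModel y) (v : (ZMod 2)[X]) :
    (y + φ v) * (y + φ (v + A)) = φ (nrm v 1) := by
  have h1 := h.root
  have h2 := two_eq_zero (R := R)
  simp only [nrm, map_add, map_mul, map_pow, map_one] at h1 ⊢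
  linear_combination h1 + (φ v * y - φ A * φ B) * h2

theorem dvd_of_mem {I : Ideal R} (hI : I ≠ ⊤) {p : (ZMod 2)[X]} (hp : Irreducible p)
    (hpI : φ p ∈ I) {a : (ZMod 2)[X]} (ha : φ a ∈ I) : p ∣ a := by
  by_contra hd
  obtain ⟨u, w, huw⟩ := (hp.coprime_iff_not_dvd).2 hd
  apply hI
  rw [Ideal.eq_top_iff_one, ← map_one φ, ← huw, map_add, map_mul, map_mul]
  exact I.add_mem (I.mul_mem_left _ hpI) (I.mul_mem_left _ ha)

/-- A proper ideal containing an irreducible `p` and some `y + v` is generated by them. -/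
theorem IsModel.eq_span (h : IsModel y) {I : Ideal R} (hI : I ≠ ⊤) {p : (ZMod 2)[X]}
    (hp : Irreducible p) (hpI : φ p ∈ I) {v : (ZMod 2)[X]} (hv : y + φ v ∈ I) :
    I = Ideal.span {φ p, y + φ v} := by
  apply le_antisymm
  · intro z hz
    obtain ⟨a, b, rfl⟩ := h.exists_rep z
    have h1 : φ (a - b * v) ∈ I := by
      have : φ (a - b * v) = (φ a + φ b * y) - φ b * (y + φ v) := by
        simp only [map_sub, map_mul]; ring
      rw [this]
      exact I.sub_mem hz (I.mul_mem_left _ hv)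
    obtain ⟨q, hq⟩ := dvd_of_mem hI hp hpI h1
    rw [Ideal.mem_span_pair]
    refine ⟨φ q, φ b, ?_⟩
    have h2 := congrArg φ hq
    simp only [map_sub, map_mul] at h2
    linear_combination -h2
  · rw [Ideal.span_le, Set.insert_subset_iff, Set.singleton_subset_iff]
    exact ⟨hpI, hv⟩

/-- If no `y + v` belongs to a proper ideal containing the irreducible `p`, the ideal is `(p)`: were
`a + b y` in it with `p ∤ b`, multiplying by an inverse of `b` modulo `p` would give some `y + v`. -/
theorem IsModel.eq_span_singleton (h : IsModel y) {I : Ideal R} (hI : I ≠ ⊤) {p : (ZMod 2)[X]}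
    (hp : Irreducible p) (hpI : φ p ∈ I) (hv : ∀ v, y + φ v ∉ I) :
    I = Ideal.span {φ p} := by
  apply le_antisymm
  · intro z hz
    obtain ⟨a, b, rfl⟩ := h.exists_rep z
    have hb : p ∣ b := by
      by_contra hd
      obtain ⟨u, w, huw⟩ := (hp.coprime_iff_not_dvd).2 hd
      apply hv (w * a)
      have h1 := congrArg φ huw
      simp only [map_add, map_mul, map_one] at h1
      have : y + φ (w * a) = φ w * (φ a + φ b * y) + φ u * y * φ p := by
        simp only [map_mul]
        linear_combination -y * h1
      rw [this]
      exact I.add_mem (I.mul_mem_left _ hz) (I.mul_mem_left _ hpI)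
    obtain ⟨q, rfl⟩ := hb
    have h1 : φ a ∈ I := by
      have : φ a = (φ a + φ (p * q) * y) - (φ q * y) * φ p := by
        simp only [map_mul]; ring
      rw [this]
      exact I.sub_mem hz (I.mul_mem_left _ hpI)
    obtain ⟨r, rfl⟩ := dvd_of_mem hI hp hpI h1
    rw [Ideal.mem_span_singleton]
    exact ⟨φ r + φ q * y, by simp only [map_mul]; ring⟩
  · rw [Ideal.span_le, Set.singleton_subset_iff]
    exact hpI

/-- The prime ideal `(A, y)` above the ramified polynomial `A`. -/
noncomputable abbrev ramified (y : R) : Ideal R := Ideal.span {φ A, y}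

theorem IsModel.ramified_sq (h : IsModel y) : ramified y * ramified y = Ideal.span {φ A} := by
  rw [Ideal.span_pair_mul_span_pair]
  have h1 := h.root
  rw [map_mul] at h1
  apply le_antisymm
  · rw [Ideal.span_le]
    simp only [Set.insert_subset_iff, Set.singleton_subset_iff, SetLike.mem_coe,
      Ideal.mem_span_singleton]
    refine ⟨dvd_mul_right _ _, dvd_mul_right _ _, dvd_mul_left _ _, -(y + φ B), ?_⟩
    linear_combination h1
  · rw [Ideal.span_le, Set.singleton_subset_iff]
    set J := Ideal.span {φ A * φ A, φ A * y, y * φ A, y * y}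
    have m1 : φ A * φ A ∈ J := Ideal.subset_span (by simp)
    have m2 : φ A * y ∈ J := Ideal.subset_span (by simp)
    have m3 : y * y ∈ J := Ideal.subset_span (by simp)
    obtain ⟨u, w, huw⟩ := coprime_A_B
    have h2 := congrArg φ huw
    simp only [map_add, map_mul, map_one] at h2
    have : φ A = φ u * (φ A * φ A) + (-φ w) * (y * y + φ A * y) := by
      linear_combination -φ A * h2 + φ w * h1
    rw [SetLike.mem_coe, this]
    exact J.add_mem (J.mul_mem_left _ m1) (J.mul_mem_left _ (J.add_mem m3 m2))

theorem IsModel.ramified_ne_top (h : IsModel y) : ramified y ≠ ⊤ := by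
  rw [Ne, Ideal.eq_top_iff_one, Ideal.mem_span_pair]
  rintro ⟨s, t, hst⟩
  obtain ⟨a, b, rfl⟩ := h.exists_rep s
  obtain ⟨c, d, rfl⟩ := h.exists_rep t
  have h1 := h.mul_rep a b A 0
  have h2 := h.mul_rep c d 0 1
  simp only [map_zero, map_one, zero_mul, one_mul, add_zero, zero_add] at h1 h2
  rw [h1, h2] at hst
  have h3 := h.ext (a := a * A + A * B * b * 0 + (c * 0 + A * B * d * 1))
    (b := a * 0 + b * A + A * b * 0 + (c * 1 + d * 0 + A * d * 1)) (c := 1) (d := 0) (by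
      simp only [map_add, map_one, map_zero] at hst ⊢
      linear_combination hst)
  refine irreducible_A.not_isUnit (isUnit_of_dvd_one ⟨a + B * d, ?_⟩)
  linear_combination -h3.1

theorem IsModel.ramified_not_principal (h : IsModel y) : ¬ (ramified y).IsPrincipal := by
  rintro ⟨g, hg⟩
  obtain ⟨a, b, rfl⟩ := h.exists_rep g
  rw [Ideal.submodule_span_eq] at hg
  -- multiplicativity of the norm, in characteristic `2`
  have nrm_dvd : ∀ c d : (ZMod 2)[X], φ c + φ d * y ∈ ramified y → nrm a b ∣ nrm c d := by
    intro c d hcd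
    rw [hg, Ideal.mem_span_singleton] at hcd
    obtain ⟨k, hk⟩ := hcd
    obtain ⟨r, s, rfl⟩ := h.exists_rep k
    rw [h.mul_rep] at hk
    obtain ⟨rfl, rfl⟩ := h.ext hk
    refine ⟨nrm r s, ?_⟩
    unfold nrm
    linear_combination (2 * A * B * a * b * r * s + A ^ 2 * B * a * b * s ^ 2 +
      A ^ 2 * B * b ^ 2 * r * s + A ^ 3 * B * b ^ 2 * s ^ 2) * two_eq_zero_poly
  have h1 : nrm a b ∣ A ^ 2 := by
    have := nrm_dvd A 0 (by simpa using Ideal.subset_span (by simp))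
    simpa [nrm] using this
  have h2 : nrm a b ∣ A * B := by
    have := nrm_dvd 0 1 (by simpa using Ideal.subset_span (by simp))
    simpa [nrm] using this
  have h3 : nrm a b ∣ A := by
    obtain ⟨u, w, huw⟩ := coprime_A_B
    have : A = u * A ^ 2 + w * (A * B) := by linear_combination -A * huw
    rw [this]
    exact dvd_add (h1.mul_left _) (h2.mul_left _)
  have hdeg := natDegree_le_of_dvd h3 irreducible_A.ne_zero
  rw [natDegree_A] at hdeg
  have hb : b = 0 := by
    by_contra hb
    have := seven_le_natDegree_nrm a b hb
    omega
  subst hb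
  have h4 : a * a ∣ A := by simpa [nrm, pow_two] using h3
  have ha : IsUnit a := irreducible_A.squarefree a h4
  apply h.ramified_ne_top
  rw [hg, Ideal.span_singleton_eq_top]
  simpa using ha.map φ

variable [IsDedekindDomain R]

/-- The class of the ideal `I` lies in `H`; vacuous for the zero ideal, which has no class. -/
def GoodFor (H : Subgroup (ClassGroup R)) (I : Ideal R) : Prop :=
  ∀ hI : I ∈ (Ideal R)⁰, ClassGroup.mk0 ⟨I, hI⟩ ∈ H

/-- The reduction step: a proper ideal containing an irreducible `p` has class in `H` as soon as `(A, y)`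
and all ideals containing a nonzero polynomial of degree less than `deg p` do. -/
theorem IsModel.good_of_prime (h : IsModel y) {H : Subgroup (ClassGroup R)}
    (hP : GoodFor H (ramified y)) {I : Ideal R} (hI : I ≠ ⊤) {p : (ZMod 2)[X]}
    (hp : Irreducible p) (hpI : φ p ∈ I)
    (ih : ∀ w : (ZMod 2)[X], w ≠ 0 → w.natDegree < p.natDegree →
      ∀ J : Ideal R, φ w ∈ J → GoodFor H J) : GoodFor H I := by
  by_cases hv : ∃ v, y + φ v ∈ I
  · obtain ⟨v, hv, hvd⟩ : ∃ v, y + φ v ∈ I ∧ v.natDegree < p.natDegree := by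
      obtain ⟨v, hv⟩ := hv
      refine ⟨v % p, ?_, natDegree_mod_lt _ hp.natDegree_pos.ne'⟩
      have h1 := congrArg φ (EuclideanDomain.div_add_mod v p)
      simp only [map_add, map_mul] at h1
      have : y + φ (v % p) = (y + φ v) - φ (v / p) * φ p := by linear_combination h1
      rw [this]
      exact I.sub_mem hv (I.mul_mem_left _ hpI)
    have hspan := h.eq_span hI hp hpI hv
    have hconj := h.mul_conj v
    have hdvd : p ∣ nrm v 1 := by
      apply dvd_of_mem hI hp hpI
      rw [← hconj]
      exact I.mul_mem_right _ hv
    rcases le_or_gt p.natDegree 3 with hd | hd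
    · obtain ⟨rfl, rfl⟩ := eq_A_of_small p v hp hd hvd hdvd
      rw [map_zero, add_zero] at hspan
      rwa [hspan]
    · obtain ⟨w, hw⟩ := hdvd
      have h7 := seven_le_natDegree_nrm v 1 one_ne_zero
      have hw0 : w ≠ 0 := by
        rintro rfl
        rw [hw, mul_zero, natDegree_zero] at h7
        omega
      have hwd : w.natDegree < p.natDegree := by
        have h1 : (nrm v 1).natDegree ≤ max (2 * v.natDegree) 7 := by
          have e1 : (v ^ 2).natDegree ≤ 2 * v.natDegree := natDegree_pow_le
          have e2 : (A * v * 1).natDegree ≤ 3 + v.natDegree := by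
            rw [mul_one, ← natDegree_A]
            exact natDegree_mul_le
          have e3 : (A * B * 1 ^ 2).natDegree ≤ 7 := by
            rw [one_pow, mul_one]
            refine natDegree_mul_le.trans ?_
            rw [natDegree_A, natDegree_B]
          have e4 := natDegree_add_le (v ^ 2 + A * v * 1) (A * B * 1 ^ 2)
          have e5 := natDegree_add_le (v ^ 2) (A * v * 1)
          change (v ^ 2 + A * v * 1 + A * B * 1 ^ 2).natDegree ≤ _
          omega
        rw [hw, natDegree_mul hp.ne_zero hw0] at h1
        omega
      set α := y + φ v with hα
      set J : Ideal R := Ideal.span {φ w, α}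
      have hprod : I * J = Ideal.span {α} := by
        rw [hspan, Ideal.span_pair_mul_span_pair]
        rw [hw, map_mul] at hconj
        apply le_antisymm
        · rw [Ideal.span_le]
          simp only [Set.insert_subset_iff, Set.singleton_subset_iff, SetLike.mem_coe,
            Ideal.mem_span_singleton]
          exact ⟨⟨_, hconj.symm⟩, dvd_mul_left _ _, dvd_mul_right _ _, dvd_mul_right _ _⟩
        · rw [Ideal.span_le, Set.singleton_subset_iff]
          set L := Ideal.span {φ p * φ w, φ p * α, α * φ w, α * α}
          have m1 : φ p * α ∈ L := Ideal.subset_span (by simp)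
          have m2 : α * φ w ∈ L := Ideal.subset_span (by simp)
          obtain ⟨r, s, hrs⟩ := (hp.coprime_iff_not_dvd).2
            (fun hd => hw0 (eq_zero_of_dvd_of_natDegree_lt hd hwd))
          have h2 := congrArg φ hrs
          simp only [map_add, map_mul, map_one] at h2
          have : α = φ r * (φ p * α) + φ s * (α * φ w) := by linear_combination -α * h2
          rw [SetLike.mem_coe, this]
          exact L.add_mem (L.mul_mem_left _ m1) (L.mul_mem_left _ m2)
      have hα0 : α ≠ 0 := by
        intro h0
        have := h.indep v 1 (by rw [map_one, ← h0, hα]; ring)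
        exact one_ne_zero this.2
      have hJ : J ∈ (Ideal R)⁰ := by
        rw [mem_nonZeroDivisors_iff_ne_zero]
        intro h0
        rw [h0, mul_zero, eq_comm] at hprod
        exact hα0 (Ideal.span_singleton_eq_bot.1 hprod)
      intro hI0
      have hmul : ClassGroup.mk0 ⟨I, hI0⟩ * ClassGroup.mk0 ⟨J, hJ⟩ = 1 := by
        rw [← map_mul]
        refine (ClassGroup.mk0_eq_one_iff (mul_mem hI0 hJ)).2 ?_
        rw [hprod]
        exact ⟨α, rfl⟩
      rw [eq_inv_of_mul_eq_one_left hmul]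
      exact H.inv_mem (ih w hw0 hwd J (Ideal.subset_span (by simp)) hJ)
  · push Not at hv
    intro hI0
    rw [(ClassGroup.mk0_eq_one_iff hI0).2 ⟨φ p, h.eq_span_singleton hI hp hpI hv⟩]
    exact H.one_mem

/-- If the class of `(A, y)` lies in `H`, so does the class of every ideal containing a nonzero
polynomial. -/
theorem IsModel.good (h : IsModel y) {H : Subgroup (ClassGroup R)}
    (hP : GoodFor H (ramified y)) (n : ℕ) :
    ∀ c : (ZMod 2)[X], c ≠ 0 → c.natDegree = n → ∀ I : Ideal R, φ c ∈ I → GoodFor H I := by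
  induction n using Nat.strong_induction_on with
  | _ n ih =>
  intro c hc hcn I
  induction I using UniqueFactorizationMonoid.induction_on_prime with
  | h₁ => exact fun _ h0 => absurd rfl (mem_nonZeroDivisors_iff_ne_zero.1 h0)
  | h₂ I hI =>
    intro _ hI0
    rw [(ClassGroup.mk0_eq_one_iff hI0).2 ⟨1, by simpa using Ideal.isUnit_iff.1 hI⟩]
    exact H.one_mem
  | h₃ J Q hJ hQ hgood =>
    intro hmem hI0
    have hQ' : Q.IsPrime := Ideal.isPrime_of_prime hQ
    have hcQ : c ∈ Q.comap φ := (Ideal.mul_le_left : Q * J ≤ Q) hmem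
    set p := Submodule.IsPrincipal.generator (Q.comap φ)
    have hpmem : p ∈ Q.comap φ := Submodule.IsPrincipal.generator_mem _
    have hpc : p ∣ c := (Submodule.IsPrincipal.mem_iff_generator_dvd _).1 hcQ
    have hp : Prime p := Submodule.IsPrincipal.prime_generator_of_isPrime _
      (fun h0 => hc (by simpa [h0] using hcQ))
    have hQgood : GoodFor H Q := by
      refine h.good_of_prime hP hQ'.ne_top hp.irreducible hpmem ?_
      intro w hw0 hwd K hK
      exact ih w.natDegree (hwd.trans_le (hcn ▸ natDegree_le_of_dvd hpc hc)) w hw0 rfl K hK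
    have hQ0 : Q ∈ (Ideal R)⁰ := mem_nonZeroDivisors_of_ne_zero hQ.ne_zero
    have hJ0 : J ∈ (Ideal R)⁰ := mem_nonZeroDivisors_of_ne_zero hJ
    have : (⟨Q * J, hI0⟩ : (Ideal R)⁰) = ⟨Q, hQ0⟩ * ⟨J, hJ0⟩ := rfl
    rw [this, map_mul]
    exact H.mul_mem (hQgood hQ0) (hgood ((Ideal.mul_le_right : Q * J ≤ J) hmem) hJ0)

theorem IsModel.classGroup (h : IsModel y) :
    IsCyclic (ClassGroup R) ∧ Nat.card (ClassGroup R) = 2 := by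
  have hA0 : φ A ≠ 0 := fun h0 => irreducible_A.ne_zero (h.injective (by rw [h0, map_zero]))
  have hP0 : ramified y ∈ (Ideal R)⁰ := by
    rw [mem_nonZeroDivisors_iff_ne_zero]
    intro h0
    have : φ A ∈ ramified y := Ideal.subset_span (by simp)
    rw [h0] at this
    exact hA0 this
  set c := ClassGroup.mk0 ⟨ramified y, hP0⟩ with hc
  have hc1 : c ≠ 1 := by
    rw [hc, Ne, ClassGroup.mk0_eq_one_iff]
    exact h.ramified_not_principal
  have hc2 : c ^ 2 = 1 := by
    rw [pow_two, hc, ← map_mul]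
    refine (ClassGroup.mk0_eq_one_iff (mul_mem hP0 hP0)).2 ?_
    rw [h.ramified_sq]
    exact ⟨φ A, rfl⟩
  have hall : ∀ x, x ∈ Subgroup.zpowers c := by
    intro x
    obtain ⟨⟨I, hI⟩, rfl⟩ := ClassGroup.mk0_surjective x
    obtain ⟨g, hgI, hg0⟩ := Submodule.exists_mem_ne_zero_of_ne_bot
      (mem_nonZeroDivisors_iff_ne_zero.1 hI)
    -- the norm of a nonzero element of `I` is a nonzero polynomial in `I`
    obtain ⟨a, b, rfl⟩ := h.exists_rep g
    have hn : (φ a + φ b * y) * (φ (a + A * b) + φ b * y) = φ (nrm a b) := by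
      rw [h.mul_rep]
      have h2 := two_eq_zero (R := R)
      simp only [nrm, map_add, map_mul, map_pow]
      linear_combination (φ a * φ b + φ A * φ b ^ 2) * y * h2
    have hn0 : nrm a b ≠ 0 := by
      by_cases hb : b = 0
      · subst hb
        have : a ≠ 0 := by rintro rfl; simp at hg0
        simpa [nrm] using this
      · intro h0
        have := seven_le_natDegree_nrm a b hb
        rw [h0, natDegree_zero] at this
        omega
    exact h.good (H := Subgroup.zpowers c) (fun _ => Subgroup.mem_zpowers c) _ _ hn0 rfl I
      (hn ▸ I.mul_mem_right _ hgI) hI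
  refine ⟨⟨c, hall⟩, ?_⟩
  have := Fact.mk Nat.prime_two
  rw [← orderOf_eq_prime hc2 hc1, ← Nat.card_zpowers, (Subgroup.eq_top_iff' _).2 hall,
    Subgroup.card_top]

end Ideals

/-! ### The ring of integers -/

section Integers

variable {K : Type*} [Field K] [Algebra (RatFunc (ZMod 2)) K] [Algebra (ZMod 2)[X] K]
  [IsScalarTower (ZMod 2)[X] (RatFunc (ZMod 2)) K]

local notation "ι" => algebraMap (ZMod 2)[X] (RatFunc (ZMod 2))
local notation "j" => algebraMap (RatFunc (ZMod 2)) K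

theorem exists_of_isIntegral (r : RatFunc (ZMod 2)) (hr : IsIntegral (ZMod 2)[X] (j r)) :
    ∃ a, ι a = r :=
  IsIntegrallyClosed.isIntegral_iff.1
    ((isIntegral_algebraMap_iff (algebraMap (RatFunc (ZMod 2)) K).injective).1 hr)

/-- If the trace `s A` and the norm of `r + s y` are polynomials, then `r` and `s` are polynomials:
`A r` is integral, and the Eisenstein property of the equation at `A` removes the denominators. -/
theorem polynomial_of_integral (r s : RatFunc (ZMod 2)) (u n : (ZMod 2)[X])
    (hu : ι u = s * ι A) (hn : ι n = r ^ 2 + ι A * r * s + ι A * ι B * s ^ 2) :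
    (∃ a, ι a = r) ∧ ∃ b, ι b = s := by
  have hι : Function.Injective ι := IsFractionRing.injective _ _
  have hA0 : ι A ≠ 0 := (map_ne_zero_iff _ hι).2 irreducible_A.ne_zero
  have hv : IsIntegral (ZMod 2)[X] (ι A * r) := by
    refine ⟨X ^ 2 + C (A * u) * X + C (A * B * u ^ 2 - A ^ 2 * n), by monicity!, ?_⟩
    simp only [eval₂_add, eval₂_mul, eval₂_pow, eval₂_X, eval₂_C]
    simp only [map_mul, map_sub, map_pow, hu, hn]
    ring
  obtain ⟨v, hv⟩ := IsIntegrallyClosed.isIntegral_iff.1 hv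
  have hA := irreducible_A.prime
  have e1 : v ^ 2 + A * u * v + A * B * u ^ 2 = A ^ 2 * n := by
    apply hι
    simp only [map_add, map_mul, map_pow, hu, hn, hv]
    ring
  obtain ⟨a, rfl⟩ : A ∣ v :=
    hA.dvd_of_dvd_pow (n := 2) ⟨A * n - u * v - B * u ^ 2, by linear_combination e1⟩
  have e2 : B * u ^ 2 = A * (n - a ^ 2 - u * a) := by
    apply mul_left_cancel₀ hA.ne_zero
    linear_combination e1
  obtain ⟨b, rfl⟩ : A ∣ u :=
    hA.dvd_of_dvd_pow (n := 2) (coprime_A_B.dvd_of_dvd_mul_left ⟨_, e2⟩)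
  rw [map_mul] at hu hv
  refine ⟨⟨a, mul_left_cancel₀ hA0 hv⟩, b, mul_left_cancel₀ hA0 ?_⟩
  rw [hu, mul_comm]

/-- Here `σ` is the nontrivial automorphism of the quadratic extension, which provides trace and norm. -/
theorem exists_rep_of_isIntegral (t : K) (σ : K →ₐ[RatFunc (ZMod 2)] K)
    (hroot : t ^ 2 + j (ι A) * t + j (ι A) * j (ι B) = 0) (hσ : σ t = t + j (ι A))
    (r s : RatFunc (ZMod 2)) (hz : IsIntegral (ZMod 2)[X] (j r + j s * t)) :
    ∃ a b, j r + j s * t = j (ι a) + j (ι b) * t := by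
  have h2K : (2 : K) = 0 := two_eq_zero
  have hz' : IsIntegral (ZMod 2)[X] (σ (j r + j s * t)) :=
    hz.map (σ.restrictScalars (ZMod 2)[X])
  simp only [map_add, map_mul, hσ, σ.commutes] at hz'
  have htr : j (s * ι A) = (j r + j s * t) + (j r + j s * (t + j (ι A))) := by
    rw [map_mul]
    linear_combination -(j r + j s * t) * h2K
  have hnm : j (r ^ 2 + ι A * r * s + ι A * ι B * s ^ 2) =
      (j r + j s * t) * (j r + j s * (t + j (ι A))) := by
    simp only [map_add, map_mul, map_pow]
    linear_combination -j s ^ 2 * hroot + (j s ^ 2 * j (ι A) * j (ι B) - j r * j s * t) * h2K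
  obtain ⟨u, hu⟩ := exists_of_isIntegral (K := K) (s * ι A) (htr ▸ hz.add hz')
  obtain ⟨n, hn⟩ := exists_of_isIntegral (K := K) _ (hnm ▸ hz.mul hz')
  obtain ⟨⟨a, rfl⟩, b, rfl⟩ := polynomial_of_integral r s u n hu hn
  exact ⟨a, b, rfl⟩

end Integers

end ClassGroupSeven
open ClassGroupSeven

theorem class_group_statement_7
    (f : Polynomial (RatFunc (ZMod 2)))
    (hf : f = X ^ 2 + C (RatFunc.X ^ 3 + RatFunc.X ^ 2 + 1) * X + C ((RatFunc.X ^ 3 + RatFunc.X ^ 2 + 1) * (RatFunc.X ^ 4 + RatFunc.X ^ 3 + 1)))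
    [Fact (Irreducible f)] :
    IsCyclic (ClassGroup (FunctionField.ringOfIntegers (ZMod 2) (AdjoinRoot f))) ∧
      Nat.card (ClassGroup (FunctionField.ringOfIntegers (ZMod 2) (AdjoinRoot f))) = 2 := by
  have hirr : Irreducible f := Fact.out
  let ι := algebraMap (ZMod 2)[X] (RatFunc (ZMod 2))
  have hι : Function.Injective ι := IsFractionRing.injective _ _
  have hA : ι A = RatFunc.X ^ 3 + RatFunc.X ^ 2 + 1 := by simp [ι, A]
  have hB : ι B = RatFunc.X ^ 4 + RatFunc.X ^ 3 + 1 := by simp [ι, B]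
  rw [← hA, ← hB] at hf
  have hA0 : ι A ≠ 0 := (map_ne_zero_iff _ hι).2 irreducible_A.ne_zero
  have hdeg : f.natDegree = 2 := by rw [hf]; compute_degree!
  have hmonic : f.Monic := by rw [hf]; monicity!
  let pb := AdjoinRoot.powerBasis hirr.ne_zero
  have : FiniteDimensional (RatFunc (ZMod 2)) (AdjoinRoot f) := pb.finite
  have : FunctionField (ZMod 2) (AdjoinRoot f) := this
  have htower : IsScalarTower (ZMod 2)[X] (RatFunc (ZMod 2)) (AdjoinRoot f) := inferInstance
  let j := algebraMap (RatFunc (ZMod 2)) (AdjoinRoot f)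
  have hj : Function.Injective j := j.injective
  set t := AdjoinRoot.root f with ht
  have h2K : (2 : AdjoinRoot f) = 0 := two_eq_zero
  have hroot : t ^ 2 + j (ι A) * t + j (ι A * ι B) = 0 := by
    have : ∀ g, g = f → AdjoinRoot.mk f g = 0 := by
      rintro g rfl
      exact AdjoinRoot.mk_self
    have h0 := this _ hf.symm
    simp only [map_add, map_mul, map_pow, AdjoinRoot.mk_X, AdjoinRoot.mk_C] at h0
    rw [map_mul]
    exact h0
  have hsep : Algebra.IsSeparable (RatFunc (ZMod 2)) (AdjoinRoot f) := by
    have h1 : f.Separable := by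
      rw [separable_iff_derivative_ne_zero hirr, hf]
      simp only [derivative_add, derivative_mul, derivative_C, derivative_X_pow, derivative_X]
      intro h0
      apply hA0
      have := congrArg (coeff · 0) h0
      simpa using this
    have h2 : IsSeparable (RatFunc (ZMod 2)) t := by
      rw [IsSeparable, ht, AdjoinRoot.minpoly_root hirr.ne_zero, hmonic.leadingCoeff]
      simpa using h1
    have h3 := (IntermediateField.isSeparable_adjoin_simple_iff_isSeparable _ _).2 h2
    rw [ht, IntermediateField.adjoin_root_eq_top] at h3
    exact AlgEquiv.Algebra.isSeparable IntermediateField.topEquiv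
  have hrepK : ∀ z : AdjoinRoot f, ∃ r s, z = j r + j s * t := by
    intro z
    obtain ⟨q, rfl⟩ := AdjoinRoot.mk_surjective z
    have h1 : AdjoinRoot.mk f q = AdjoinRoot.mk f (q %ₘ f) := by
      rw [AdjoinRoot.mk_eq_mk]
      exact ⟨q /ₘ f, by linear_combination -(modByMonic_add_div q f)⟩
    have h2 : (q %ₘ f).natDegree < 2 := by
      refine lt_of_lt_of_eq ?_ hdeg
      exact natDegree_modByMonic_lt q hmonic (fun h => by rw [h] at hdeg; simp at hdeg)
    refine ⟨(q %ₘ f).coeff 0, (q %ₘ f).coeff 1, ?_⟩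
    rw [h1]
    conv_lhs => rw [(q %ₘ f).as_sum_range' 2 h2]
    simp [Finset.sum_range_succ, ← C_mul_X_pow_eq_monomial, j, ht]
  have hindK : ∀ r s, j r + j s * t = 0 → r = 0 ∧ s = 0 := by
    intro r s h0
    have h1 : AdjoinRoot.mk f (C r + C s * X) = 0 := by simpa [j] using h0
    rw [AdjoinRoot.mk_eq_zero] at h1
    have h2 : (C r + C s * X).natDegree < f.natDegree := by
      rw [hdeg, Nat.lt_succ_iff]
      compute_degree
    have h3 := eq_zero_of_dvd_of_natDegree_lt h1 h2
    have h4 := congrArg (coeff · 0) h3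
    have h5 := congrArg (coeff · 1) h3
    simp at h4 h5
    exact ⟨h4, h5⟩
  -- `t ↦ t + A` defines the nontrivial automorphism; the equation is stated for a copy `g` of `f`,
  -- since `f` also occurs in the type `AdjoinRoot f`
  have hconj : ∀ g, g = f →
      eval₂ (Algebra.ofId (RatFunc (ZMod 2)) (AdjoinRoot f) : _ →+* _) (t + j (ι A)) g = 0 := by
    rintro g hg
    rw [hg.trans hf]
    simp only [eval₂_add, eval₂_mul, eval₂_pow, eval₂_X, eval₂_C]
    change (t + j (ι A)) ^ 2 + j (ι A) * (t + j (ι A)) + j (ι A * ι B) = 0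
    linear_combination hroot + (j (ι A) * t + j (ι A) ^ 2) * h2K
  let σ : AdjoinRoot f →ₐ[RatFunc (ZMod 2)] AdjoinRoot f :=
    AdjoinRoot.liftAlgHom f (Algebra.ofId _ _) (t + j (ι A)) (hconj f rfl)
  have hσt : σ t = t + j (ι A) := AdjoinRoot.liftAlgHom_root _ _ _ _
  have hrepO : ∀ z : AdjoinRoot f, IsIntegral (ZMod 2)[X] z →
      ∃ a b, z = j (ι a) + j (ι b) * t := by
    intro z hz
    obtain ⟨r, s, rfl⟩ := hrepK z
    rw [map_mul] at hroot
    exact exists_rep_of_isIntegral t σ hroot hσt r s hz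
  let O := FunctionField.ringOfIntegers (ZMod 2) (AdjoinRoot f)
  have htint : IsIntegral (ZMod 2)[X] t := by
    refine ⟨X ^ 2 + C A * X + C (A * B), by monicity!, ?_⟩
    simp only [eval₂_add, eval₂_mul, eval₂_pow, eval₂_X, eval₂_C]
    rw [← map_mul] at hroot
    exact hroot
  let y : O := ⟨t, htint⟩
  have hmodel : IsModel y := by
    refine ⟨?_, ?_, ?_⟩
    · apply Subtype.ext
      rw [map_mul]
      rw [map_mul] at hroot
      exact hroot
    · rintro ⟨z, hz⟩
      obtain ⟨a, b, hab⟩ := hrepO z hz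
      exact ⟨a, b, Subtype.ext hab⟩
    · intro a b hab
      obtain ⟨h1, h2⟩ := hindK (ι a) (ι b) (congrArg Subtype.val hab)
      exact ⟨hι (by rw [h1, map_zero]), hι (by rw [h2, map_zero])⟩
  exact hmodel.classGroup
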